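/- arXiv:1409.4471 — 3 statements merged into one kernel-verified Lean document; each statement's English description precedes it below -/
import Mathlib

section
/- Let n ≥ 1 and let v : ℝⁿ → ℝⁿ be a continuously differentiable vector field with compact support, and let φ : ℝ → ℝⁿ → ℝⁿ be its flow, i.e. φ(0, x) = x for all x and for each x the curve t ↦ φ(t, x) has derivative v(φ(t, x)) at every t. Then for every compact set Ω ⊆ ℝⁿ and every t ∈ ℝ, the function s ↦ vol(φ(s, ·)(Ω)) (Lebesgue measure of the image of Ω under the time-s flow) is differentiable at t with derivative ∫_{φ(t,·)(Ω)} div v(x) dx, where div v(x) is the trace of the Fréchet derivative of v at x. -/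
open MeasureTheory

/-!
For `h` near `0` the map `φ h - id` is `C |h|`-Lipschitz. Hence `φ h` is injective and, by
Rademacher, differentiable almost everywhere, so the area formula gives
`vol (φ h '' Ω) = ∫ x in Ω, |det D(φ h)(x)|`. At a point where `v` is strictly differentiable,
`D(φ h) = 1 + h • Dv + o(h)`, and the derivative of `det` at the identity is the trace, so the
integrand has derivative `div v` at `h = 0`, with difference quotients bounded by the Lipschitz
estimate; differentiate under the integral. The group law moves the base time from `0` to `t`.
-/

open Asymptotics Filter Topology
open scoped NNReal

section Determinant

theorem det_one_continuousLinearMap {R M : Type*} [CommRing R] [AddCommGroup M] [Module R M]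
    [TopologicalSpace M] : (1 : M →L[R] M).det = 1 :=
  LinearMap.det_id

variable {𝕜 E : Type*} [NontriviallyNormedField 𝕜] [CompleteSpace 𝕜] [NormedAddCommGroup E]
  [NormedSpace 𝕜 E] [FiniteDimensional 𝕜 E]

variable (𝕜 E) in
/-- The trace as a continuous linear functional on endomorphisms; it is the derivative of the
determinant at the identity. -/
noncomputable def traceCLM : (E →L[𝕜] E) →L[𝕜] 𝕜 :=
  (LinearMap.trace 𝕜 E ∘ₗ ContinuousLinearMap.coeLM 𝕜).toContinuousLinearMap

open Matrix in
theorem hasFDerivAt_det_one :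
    HasFDerivAt (fun A : E →L[𝕜] E => A.det) (traceCLM 𝕜 E) 1 := by
  classical
  let b := Module.finBasis 𝕜 E
  let toRows : (E →L[𝕜] E) →L[𝕜] (Fin (Module.finrank 𝕜 E) → Fin (Module.finrank 𝕜 E) → 𝕜) :=
    ((LinearMap.toMatrix b b).toLinearMap ∘ₗ ContinuousLinearMap.coeLM 𝕜).toContinuousLinearMap
  let detRows : ContinuousMultilinearMap 𝕜
      (fun _ : Fin (Module.finrank 𝕜 E) => Fin (Module.finrank 𝕜 E) → 𝕜) 𝕜 :=
    { toMultilinearMap := detRowAlternating.toMultilinearMap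
      cont := Continuous.matrix_det continuous_id }
  have hone : toRows 1 = (1 : Matrix _ _ 𝕜) := LinearMap.toMatrix_one b
  have hdet : (fun A : E →L[𝕜] E => A.det) = detRows ∘ toRows :=
    funext fun A => (LinearMap.det_toMatrix b (A : E →ₗ[𝕜] E)).symm
  have hderiv : detRows.linearDeriv (toRows 1) ∘L toRows = traceCLM 𝕜 E := by
    ext A
    calc detRows.linearDeriv (toRows 1) (toRows A)
        = ∑ i, (updateRow 1 i (toRows A i)).det := by
          rw [ContinuousMultilinearMap.linearDeriv_apply, hone]; rfl
      _ = trace (toRows A) := by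
          simp_rw [← cramer_transpose_apply, transpose_one, cramer_one]; rfl
      _ = LinearMap.trace 𝕜 E A := (LinearMap.trace_eq_matrix_trace 𝕜 b _).symm
  rw [hdet, ← hderiv]
  exact (detRows.hasFDerivAt _).comp _ toRows.hasFDerivAt

end Determinant

section AbsDet

variable {E : Type*} [NormedAddCommGroup E] [NormedSpace ℝ E] [FiniteDimensional ℝ E]

theorem hasFDerivAt_abs_det_one :
    HasFDerivAt (fun A : E →L[ℝ] E => |A.det|) (traceCLM ℝ E) 1 := by
  simpa [det_one_continuousLinearMap] using
    (hasFDerivAt_det_one (𝕜 := ℝ) (E := E)).abs (by simp [det_one_continuousLinearMap])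

theorem hasDerivWithinAt_abs_det {B : ℝ → E →L[ℝ] E} {A : E →L[ℝ] E} {S : Set ℝ} {t : ℝ}
    (hB : HasDerivWithinAt B A S t) (ht : B t = 1) :
    HasDerivWithinAt (fun h => |(B h).det|) (LinearMap.trace ℝ E A) S t :=
  (ht ▸ hasFDerivAt_abs_det_one (E := E)).comp_hasDerivWithinAt t hB

end AbsDet

section NearIdentity

variable {E : Type*} [NormedAddCommGroup E]

theorem injective_of_lipschitzWith_sub_id {K : ℝ≥0} {f : E → E} (hK : K < 1)
    (hf : LipschitzWith K fun x => f x - x) : Function.Injective f := by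
  simpa using (AntilipschitzWith.id.add_lipschitzWith hf (by simpa using hK)).injective

theorem lipschitzWith_of_lipschitzWith_sub_id {K : ℝ≥0} {f : E → E}
    (hf : LipschitzWith K fun x => f x - x) : LipschitzWith (1 + K) f := by
  simpa using LipschitzWith.id.add hf

variable [NormedSpace ℝ E]

theorem norm_fderiv_sub_one_le_of_lipschitzWith_sub_id {K : ℝ≥0} {f : E → E} {x : E}
    (hf : LipschitzWith K fun x => f x - x) (hfx : DifferentiableAt ℝ f x) :
    ‖fderiv ℝ f x - 1‖ ≤ K :=
  (hfx.hasFDerivAt.sub (hasFDerivAt_id x)).le_of_lipschitz hf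

theorem exists_eventually_abs_abs_det_fderiv_sub_one_le [FiniteDimensional ℝ E]
    {C : ℝ≥0} {Φ : ℝ → E → E}
    (hΦ : ∀ᶠ h in 𝓝 0, LipschitzWith (C * ‖h‖₊) fun x => Φ h x - x) :
    ∃ K : ℝ, ∀ᶠ h in 𝓝 0, ∀ x, DifferentiableAt ℝ (Φ h) x →
      |(|(fderiv ℝ (Φ h) x).det| - 1)| ≤ K * ‖h‖ := by
  obtain ⟨K, hK, hdet⟩ := (hasFDerivAt_abs_det_one (E := E)).isBigO_sub.exists_pos
  obtain ⟨δ, hδ, hdet⟩ := Metric.eventually_nhds_iff.1 hdet.bound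
  have hsmall : ∀ᶠ h : ℝ in 𝓝 0, C * ‖h‖ < δ :=
    (Continuous.tendsto' (by fun_prop) 0 0 (by simp)).eventually_lt_const hδ
  refine ⟨K * C, ?_⟩
  filter_upwards [hΦ, hsmall] with h hh hlt x hx
  have hB : ‖fderiv ℝ (Φ h) x - 1‖ ≤ C * ‖h‖ :=
    norm_fderiv_sub_one_le_of_lipschitzWith_sub_id hh hx
  calc |(|(fderiv ℝ (Φ h) x).det| - 1)| ≤ K * ‖fderiv ℝ (Φ h) x - 1‖ := by
        simpa only [det_one_continuousLinearMap, abs_one, Real.norm_eq_abs] using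
          hdet ((dist_eq_norm _ _).trans_lt (hB.trans_lt hlt))
    _ ≤ K * C * ‖h‖ := by rw [mul_assoc]; gcongr

end NearIdentity

section AreaFormula

variable {E : Type*} [NormedAddCommGroup E] [NormedSpace ℝ E] [FiniteDimensional ℝ E]
  [MeasurableSpace E] [BorelSpace E] (μ : Measure E) [μ.IsAddHaarMeasure]

theorem addHaar_image_le_of_lipschitzOnWith {K : ℝ≥0} {f : E → E} {s : Set E}
    (hf : LipschitzOnWith K f s) : μ (f '' s) ≤ (K : ENNReal) ^ Module.finrank ℝ E * μ s := by
  let ν : Measure E := Measure.hausdorffMeasure (Module.finrank ℝ E)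
  have hν : ν (f '' s) ≤ (K : ENNReal) ^ Module.finrank ℝ E * ν s := by
    simpa only [ENNReal.rpow_natCast] using hf.hausdorffMeasure_image_le (Nat.cast_nonneg _)
  rw [Measure.isAddLeftInvariant_eq_smul μ ν, Measure.smul_apply, Measure.smul_apply,
    mul_smul_comm]
  gcongr

theorem lintegral_abs_det_fderiv_eq_addHaar_image_of_lipschitzWith {K : ℝ≥0} {f : E → E}
    {s : Set E} (hf : LipschitzWith K f) (hs : MeasurableSet s) (hinj : Set.InjOn f s) :
    ∫⁻ x in s, ENNReal.ofReal |(fderiv ℝ f x).det| ∂μ = μ (f '' s) := by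
  let D := {x | DifferentiableAt ℝ f x}
  have hD : MeasurableSet D := measurableSet_of_differentiableAt ℝ f
  have hDae : D =ᵐ[μ] Set.univ := eventuallyEq_univ.2 hf.ae_differentiableAt
  have hnull : μ (f '' (s \ D)) = 0 :=
    le_zero_iff.1 <| (addHaar_image_le_of_lipschitzOnWith μ hf.lipschitzOnWith).trans_eq <| by
      rw [measure_mono_null (Set.sdiff_subset_compl s D) (ae_eq_univ.1 hDae), mul_zero]
  calc ∫⁻ x in s, ENNReal.ofReal |(fderiv ℝ f x).det| ∂μ
      = ∫⁻ x in s ∩ D, ENNReal.ofReal |(fderiv ℝ f x).det| ∂μ :=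
        (setLIntegral_congr (inter_ae_eq_left_of_ae_eq_univ hDae)).symm
    _ = μ (f '' (s ∩ D)) :=
        lintegral_abs_det_fderiv_eq_addHaar_image μ (hs.inter hD)
          (fun x hx => hx.2.hasFDerivAt.hasFDerivWithinAt) (hinj.mono Set.inter_subset_left)
    _ = μ (f '' s) := by
        rw [← measure_congr (union_ae_eq_left_of_ae_eq_empty (ae_eq_empty.2 hnull)),
          ← Set.image_union, Set.inter_union_sdiff]

theorem measureReal_image_eq_integral_abs_det_fderiv {K : ℝ≥0} {f : E → E} {s : Set E}
    (hK : K < 1) (hf : LipschitzWith K fun x => f x - x) (hs : MeasurableSet s) :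
    μ.real (f '' s) = ∫ x in s, |(fderiv ℝ f x).det| ∂μ := by
  have hmeas : Measurable fun x => |(fderiv ℝ f x).det| :=
    (ContinuousLinearMap.continuous_det.measurable.comp (measurable_fderiv ℝ f)).abs
  rw [integral_eq_lintegral_of_nonneg_ae (.of_forall fun x => abs_nonneg _)
      hmeas.aestronglyMeasurable,
    lintegral_abs_det_fderiv_eq_addHaar_image_of_lipschitzWith μ
      (lipschitzWith_of_lipschitzWith_sub_id hf) hs
      (injective_of_lipschitzWith_sub_id hK hf).injOn, measureReal_def]

end AreaFormula

-- The limit is only required along sequences, so that the exceptional null set of the difference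
-- quotient may depend on `s`.
theorem hasDerivAt_integral_of_dominated_slope {α G : Type*} [MeasurableSpace α] {μ : Measure α}
    [NormedAddCommGroup G] [NormedSpace ℝ G] {F : ℝ → α → G} {F' : α → G} {bound : α → ℝ} {t : ℝ}
    (hF_meas : ∀ᶠ s in 𝓝[≠] t, AEStronglyMeasurable (F s) μ) (hF_int : Integrable (F t) μ)
    (h_bound : ∀ᶠ s in 𝓝[≠] t, ∀ᵐ a ∂μ, ‖slope (F · a) t s‖ ≤ bound a)
    (bound_integrable : Integrable bound μ)
    (h_lim : ∀ u : ℕ → ℝ, Tendsto u atTop (𝓝[≠] t) →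
      ∀ᵐ a ∂μ, Tendsto (fun n => slope (F · a) t (u n)) atTop (𝓝 (F' a))) :
    HasDerivAt (fun s => ∫ a, F s a ∂μ) (∫ a, F' a ∂μ) t := by
  have h_meas : ∀ᶠ s in 𝓝[≠] t, AEStronglyMeasurable (fun a => slope (F · a) t s) μ :=
    hF_meas.mono fun s hs => (hs.sub hF_int.1).const_smul _
  have h_slope : ∀ᶠ s in 𝓝[≠] t,
      ∫ a, slope (F · a) t s ∂μ = slope (fun s => ∫ a, F s a ∂μ) t s := by
    filter_upwards [h_meas, h_bound] with s hs hbs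
    have hslope : Integrable (fun a => slope (F · a) t s) μ := bound_integrable.mono' hs hbs
    have hFs : Integrable (F s) μ := by
      refine ((hslope.smul (s - t)).add hF_int).congr (.of_forall fun a => ?_)
      exact sub_smul_slope_vadd (F · a) t s
    simp only [slope_def_module]
    rw [integral_smul, integral_sub hFs hF_int]
  rw [hasDerivAt_iff_tendsto_slope]
  refine Tendsto.congr' h_slope (tendsto_of_seq_tendsto fun u hu => ?_)
  exact tendsto_integral_filter_of_dominated_convergence bound (hu.eventually h_meas)
    (hu.eventually h_bound) bound_integrable (h_lim u hu)

-- A Lipschitz `Φ h` is differentiable only almost everywhere, hence the restriction on `h` in `hA`.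
theorem hasDerivAt_measureReal_image {E : Type*} [NormedAddCommGroup E] [NormedSpace ℝ E]
    [FiniteDimensional ℝ E] [MeasurableSpace E] [BorelSpace E] (μ : Measure E)
    [μ.IsAddHaarMeasure] {C : ℝ≥0} {Φ : ℝ → E → E} {A : E → E →L[ℝ] E} {Ω : Set E}
    (hΦ0 : Φ 0 = id) (hΦ : ∀ᶠ h in 𝓝 0, LipschitzWith (C * ‖h‖₊) fun x => Φ h x - x)
    (hA : ∀ᵐ x ∂μ.restrict Ω, HasDerivWithinAt (fun h => fderiv ℝ (Φ h) x) (A x)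
      {h | DifferentiableAt ℝ (Φ h) x} 0)
    (hΩ : MeasurableSet Ω) (hμΩ : μ Ω ≠ ⊤) :
    HasDerivAt (fun h => μ.real (Φ h '' Ω)) (∫ x in Ω, LinearMap.trace ℝ E (A x) ∂μ) 0 := by
  have : IsFiniteMeasure (μ.restrict Ω) := isFiniteMeasure_restrict.2 hμΩ
  have hfderiv0 (x : E) : fderiv ℝ (Φ 0) x = 1 := by rw [hΦ0]; exact fderiv_id
  have hdet0 (x : E) : |(fderiv ℝ (Φ 0) x).det| = 1 := by
    rw [hfderiv0, det_one_continuousLinearMap, abs_one]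
  have hmeas (h : ℝ) : AEStronglyMeasurable (fun x => |(fderiv ℝ (Φ h) x).det|) (μ.restrict Ω) :=
    (ContinuousLinearMap.continuous_det.measurable.comp
      (measurable_fderiv ℝ (Φ h))).abs.aestronglyMeasurable
  have hdiff : ∀ᶠ h in 𝓝 0, ∀ᵐ x ∂μ.restrict Ω, DifferentiableAt ℝ (Φ h) x :=
    hΦ.mono fun h hh =>
      ae_restrict_of_ae (lipschitzWith_of_lipschitzWith_sub_id hh).ae_differentiableAt
  have hsmall : ∀ᶠ h : ℝ in 𝓝 0, C * ‖h‖₊ < 1 :=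
    (Continuous.tendsto' (by fun_prop) 0 0 (by simp)).eventually_lt_const one_pos
  have himage : ∀ᶠ h in 𝓝 0, μ.real (Φ h '' Ω) = ∫ x in Ω, |(fderiv ℝ (Φ h) x).det| ∂μ := by
    filter_upwards [hΦ, hsmall] with h hh hlt
    exact measureReal_image_eq_integral_abs_det_fderiv μ hlt hh hΩ
  obtain ⟨K, hK⟩ := exists_eventually_abs_abs_det_fderiv_sub_one_le hΦ
  refine HasDerivAt.congr_of_eventuallyEq (hasDerivAt_integral_of_dominated_slope
    (.of_forall hmeas) (by simp only [hdet0, integrable_const]) ?bound (integrable_const K)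
    fun u hu => ?lim) himage
  case bound =>
    filter_upwards [nhdsWithin_le_nhds hdiff, nhdsWithin_le_nhds hK, self_mem_nhdsWithin]
      with h hh hKh hne
    filter_upwards [hh] with x hx
    rw [slope_def_module, hdet0, sub_zero, norm_smul, norm_inv,
      inv_mul_le_iff₀ (norm_pos_iff.2 hne), mul_comm]
    exact hKh x hx
  case lim =>
    obtain ⟨hu0, hune⟩ := tendsto_nhdsWithin_iff.1 hu
    obtain ⟨N, hN⟩ := eventually_atTop.1 (hu0.eventually hdiff)
    filter_upwards [hA, ae_all_iff.2 fun n => ae_all_iff.2 (hN n)] with x hx hux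
    refine (hasDerivWithinAt_iff_tendsto_slope.1
      (hasDerivWithinAt_abs_det hx (hfderiv0 x))).comp ?_
    exact tendsto_nhdsWithin_iff.2 ⟨hu0, (eventually_atTop.2 ⟨N, hux⟩).and hune⟩

section Flow

variable {E : Type*} [NormedAddCommGroup E] [NormedSpace ℝ E]

/-- `φ` is the global flow of the autonomous vector field `v`; the time is the first argument, so
that `φ t` is the time-`t` map. -/
structure IsFlowOf (φ : ℝ → E → E) (v : E → E) : Prop where
  map_zero : ∀ x, φ 0 x = x
  hasDerivAt : ∀ x t, HasDerivAt (fun s => φ s x) (v (φ t x)) t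

namespace IsFlowOf

variable {φ : ℝ → E → E} {v : E → E} {L : ℝ≥0}

theorem continuous_left (hφ : IsFlowOf φ v) (x : E) : Continuous fun s => φ s x :=
  continuous_iff_continuousAt.2 fun t => (hφ.hasDerivAt x t).continuousAt

theorem neg (hφ : IsFlowOf φ v) : IsFlowOf (fun s => φ (-s)) (-v) where
  map_zero x := by simpa using hφ.map_zero x
  hasDerivAt x t := by
    simpa [Function.comp_def] using (hφ.hasDerivAt x (-t)).scomp t (hasDerivAt_neg t)

theorem map_sub (hφ : IsFlowOf φ v) (hv : LipschitzWith L v) (s t : ℝ) (x : E) :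
    φ (s - t) (φ t x) = φ s x := by
  refine congrFun (ODE_solution_unique_univ (v := fun _ => v) (s := fun _ => Set.univ) (t₀ := t)
    (f := fun s => φ (s - t) (φ t x)) (fun _ => hv.lipschitzOnWith)
    (fun s => ⟨(hφ.hasDerivAt (φ t x) (s - t)).comp_sub_const s t, trivial⟩)
    (fun s => ⟨hφ.hasDerivAt x s, trivial⟩) ?_) s
  rw [sub_self, hφ.map_zero]

theorem norm_sub_le_of_nonneg (hφ : IsFlowOf φ v) (hv : LipschitzWith L v) {s : ℝ}
    (hs : 0 ≤ s) (x y : E) : ‖φ s x - φ s y‖ ≤ ‖x - y‖ * Real.exp (L * s) := by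
  simpa [dist_eq_norm] using dist_le_of_trajectories_ODE (v := fun _ => v) (fun _ => hv)
    (hφ.continuous_left x).continuousOn (fun t _ => (hφ.hasDerivAt x t).hasDerivWithinAt)
    (hφ.continuous_left y).continuousOn (fun t _ => (hφ.hasDerivAt y t).hasDerivWithinAt)
    (by rw [hφ.map_zero, hφ.map_zero, dist_eq_norm]) s ⟨hs, le_rfl⟩

theorem norm_sub_le (hφ : IsFlowOf φ v) (hv : LipschitzWith L v) (s : ℝ) (x y : E) :
    ‖φ s x - φ s y‖ ≤ ‖x - y‖ * Real.exp (L * |s|) := by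
  rcases le_total 0 s with hs | hs
  · rw [abs_of_nonneg hs]
    exact hφ.norm_sub_le_of_nonneg hv hs x y
  · rw [abs_of_nonpos hs]
    simpa using hφ.neg.norm_sub_le_of_nonneg hv.neg (neg_nonneg.2 hs) x y

theorem continuous_uncurry (hφ : IsFlowOf φ v) (hv : LipschitzWith L v) :
    Continuous fun p : ℝ × E => φ p.1 p.2 := by
  refine continuous_iff_continuousAt.2 fun ⟨t, x⟩ => tendsto_iff_norm_sub_tendsto_zero.2 ?_
  have hbound (p : ℝ × E) : ‖φ p.1 p.2 - φ t x‖ ≤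
      ‖p.2 - x‖ * Real.exp (L * |p.1|) + ‖φ p.1 x - φ t x‖ :=
    (norm_sub_le_norm_sub_add_norm_sub _ (φ p.1 x) _).trans
      (add_le_add_left (hφ.norm_sub_le hv p.1 p.2 x) _)
  have := hφ.continuous_left x
  exact squeeze_zero (fun _ => norm_nonneg _) hbound
    (Continuous.tendsto' (by fun_prop) _ _ (by simp))

theorem lipschitzWith_sub_id (hφ : IsFlowOf φ v) (hv : LipschitzWith L v) {s : ℝ} (hs : |s| ≤ 1) :
    LipschitzWith (L * Real.toNNReal (Real.exp L) * ‖s‖₊) fun x => φ s x - x := by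
  refine LipschitzWith.of_dist_le_mul fun x y => ?_
  have hderiv (t : ℝ) (ht : t ∈ Set.Icc (-1 : ℝ) 1) :
      ‖v (φ t x) - v (φ t y)‖ ≤ L * Real.exp L * ‖x - y‖ :=
    calc ‖v (φ t x) - v (φ t y)‖ ≤ L * ‖φ t x - φ t y‖ := hv.norm_sub_le _ _
      _ ≤ L * (‖x - y‖ * Real.exp (L * |t|)) := by gcongr; exact hφ.norm_sub_le hv t x y
      _ ≤ L * (‖x - y‖ * Real.exp L) := by gcongr; exact mul_le_of_le_one_right L.2 (abs_le.2 ht)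
      _ = L * Real.exp L * ‖x - y‖ := by ring
  have hmean := (convex_Icc (-1 : ℝ) 1).norm_image_sub_le_of_norm_hasDerivWithin_le
    (f := fun t => φ t x - φ t y)
    (fun t _ => ((hφ.hasDerivAt x t).sub (hφ.hasDerivAt y t)).hasDerivWithinAt)
    hderiv (x := 0) (by simp) (abs_le.1 hs)
  rw [dist_eq_norm, dist_eq_norm, sub_sub_sub_comm]
  simpa [hφ.map_zero, mul_right_comm, (Real.exp_pos _).le] using hmean

theorem isLittleO_sub_id_sub (hφ : IsFlowOf φ v) (hv : LipschitzWith L v) (x : E) :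
    (fun p : ℝ × E => (φ p.1 p.2 - p.2) - (φ p.1 x - x)) =o[𝓝 (0, x)] fun p => p.2 - x := by
  have hfst : Tendsto Prod.fst (𝓝 ((0 : ℝ), x)) (𝓝 0) := continuous_fst.tendsto _
  have hO : (fun p : ℝ × E => (φ p.1 p.2 - p.2) - (φ p.1 x - x)) =O[𝓝 (0, x)]
      fun p => p.1 • (p.2 - x) := by
    refine IsBigO.of_bound (L * Real.toNNReal (Real.exp L) : ℝ≥0) ?_
    filter_upwards [hfst.eventually (Metric.closedBall_mem_nhds 0 one_pos)] with p hp
    rw [norm_smul, ← mul_assoc]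
    exact (hφ.lipschitzWith_sub_id hv (by simpa using hp)).norm_sub_le p.2 x
  have ho : (fun p : ℝ × E => p.1 • (p.2 - x)) =o[𝓝 (0, x)] fun p => (1 : ℝ) • (p.2 - x) :=
    ((isLittleO_one_iff ℝ).2 hfst).smul_isBigO (isBigO_refl _ _)
  simpa only [one_smul] using hO.trans_isLittleO ho

theorem isLittleO_velocity_sub (hφ : IsFlowOf φ v) (hv : LipschitzWith L v) {A : E →L[ℝ] E} {x : E}
    (hA : HasStrictFDerivAt v A x) :
    (fun p : ℝ × E => v (φ p.1 p.2) - v (φ p.1 x) - A (p.2 - x)) =o[𝓝 (0, x)]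
      fun p => p.2 - x := by
  have hid := hφ.isLittleO_sub_id_sub hv x
  have hO : (fun p : ℝ × E => φ p.1 p.2 - φ p.1 x) =O[𝓝 (0, x)] fun p => p.2 - x :=
    (hid.isBigO.add (isBigO_refl _ _)).congr_left fun p => by abel
  have hcont := hφ.continuous_uncurry hv
  have hpair : Tendsto (fun p : ℝ × E => (φ p.1 p.2, φ p.1 x)) (𝓝 (0, x)) (𝓝 (x, x)) :=
    Continuous.tendsto' (hcont.prodMk (hcont.comp (continuous_fst.prodMk continuous_const))) _ _
      (by simp [hφ.map_zero])
  have hstrict := (hA.isLittleO.comp_tendsto hpair).trans_isBigO hO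
  have hlin := (A.isBigO_comp _ _).trans_isLittleO hid
  refine (hstrict.add hlin).congr_left fun p => ?_
  simp only [Function.comp_apply, A.map_sub]
  abel

theorem isLittleO_sub_euler (hφ : IsFlowOf φ v) (hv : LipschitzWith L v) {A : E →L[ℝ] E} {x : E}
    (hA : HasStrictFDerivAt v A x) :
    (fun p : ℝ × E => φ p.1 p.2 - φ p.1 x - (p.2 - x) - p.1 • A (p.2 - x)) =o[𝓝 (0, x)]
      fun p => p.1 • (p.2 - x) := by
  refine isLittleO_iff.2 fun ε hε => ?_
  obtain ⟨r, hr, hvel⟩ := Metric.eventually_nhds_iff_ball.1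
    (isLittleO_iff.1 (hφ.isLittleO_velocity_sub hv hA) hε)
  filter_upwards [Metric.ball_mem_nhds ((0 : ℝ), x) hr] with ⟨s, y⟩ hsy
  rw [← ball_prod_same] at hsy hvel
  have hderiv (t : ℝ) : HasDerivAt (fun t => φ t y - φ t x - (y - x) - t • A (y - x))
      (v (φ t y) - v (φ t x) - A (y - x)) t := by
    refine ((((hφ.hasDerivAt y t).sub (hφ.hasDerivAt x t)).sub_const (y - x)).sub
      ((hasDerivAt_id t).smul_const (A (y - x)))).congr_deriv ?_
    rw [one_smul]
  have hmean := (convex_ball (0 : ℝ) r).norm_image_sub_le_of_norm_hasDerivWithin_le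
    (C := ε * ‖y - x‖) (fun t _ => (hderiv t).hasDerivWithinAt)
    (fun t ht => hvel (t, y) ⟨ht, hsy.2⟩)
    (Metric.mem_ball_self hr) hsy.1
  simpa [hφ.map_zero, norm_smul, mul_assoc, mul_comm, mul_left_comm] using hmean

theorem hasDerivWithinAt_fderiv (hφ : IsFlowOf φ v) (hv : LipschitzWith L v) {A : E →L[ℝ] E}
    {x : E} (hA : HasStrictFDerivAt v A x) :
    HasDerivWithinAt (fun h => fderiv ℝ (φ h) x) A {h | DifferentiableAt ℝ (φ h) x} 0 := by
  have hfderiv0 : fderiv ℝ (φ 0) x = 1 := by rw [funext hφ.map_zero]; exact fderiv_id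
  refine hasDerivWithinAt_iff_isLittleO.2 (isLittleO_iff.2 fun ε hε => ?_)
  have heuler := (isLittleO_iff.1 (hφ.isLittleO_sub_euler hv hA) hε).curry_nhds
  filter_upwards [nhdsWithin_le_nhds heuler, self_mem_nhdsWithin] with h hh hdiff
  have hrem : HasFDerivAt (fun y => φ h y - y - h • A y) (fderiv ℝ (φ h) x - 1 - h • A) x :=
    (hdiff.hasFDerivAt.sub (hasFDerivAt_id x)).sub (A.hasFDerivAt.const_smul h)
  rw [hfderiv0, sub_zero]
  refine hrem.le_of_lip' (by positivity) (hh.mono fun y hy => ?_)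
  rw [norm_smul, ← mul_assoc] at hy
  refine (congrArg norm ?_).trans_le hy
  rw [A.map_sub, smul_sub]
  abel

variable [MeasurableSpace E] [BorelSpace E] {Ω : Set E}

theorem measurableSet_image (hφ : IsFlowOf φ v) (hv : LipschitzWith L v) (hΩ : MeasurableSet Ω)
    (t : ℝ) : MeasurableSet (φ t '' Ω) := by
  have hleft : Function.LeftInverse (φ (-t)) (φ t) := fun x => by
    simpa [hφ.map_zero] using hφ.map_sub hv 0 t x
  have hright : Function.RightInverse (φ (-t)) (φ t) := fun x => by
    simpa [hφ.map_zero] using hφ.map_sub hv 0 (-t) x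
  rw [Set.image_eq_preimage_of_inverse hleft hright]
  exact ((hφ.continuous_uncurry hv).comp (.prodMk_right (-t))).measurable hΩ

variable [FiniteDimensional ℝ E] {μ : Measure E} [μ.IsAddHaarMeasure]

theorem addHaar_image_ne_top (hφ : IsFlowOf φ v) (hv : LipschitzWith L v) (hμΩ : μ Ω ≠ ⊤)
    (t : ℝ) : μ (φ t '' Ω) ≠ ⊤ := by
  have hLip : LipschitzWith (Real.exp (L * |t|)).toNNReal (φ t) :=
    LipschitzWith.of_dist_le' fun x y => by
      simpa only [dist_eq_norm, mul_comm] using hφ.norm_sub_le hv t x y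
  exact ne_top_of_le_ne_top (by finiteness)
    (addHaar_image_le_of_lipschitzOnWith μ (hLip.lipschitzOnWith (s := Ω)))

theorem hasDerivAt_measureReal_image_zero (hφ : IsFlowOf φ v) (hv : LipschitzWith L v)
    (hv' : ∀ᵐ x ∂μ, HasStrictFDerivAt v (fderiv ℝ v x) x) (hΩ : MeasurableSet Ω)
    (hμΩ : μ Ω ≠ ⊤) :
    HasDerivAt (fun s => μ.real (φ s '' Ω)) (∫ x in Ω, LinearMap.trace ℝ E (fderiv ℝ v x) ∂μ)
      0 := by
  have hsmall : ∀ᶠ h : ℝ in 𝓝 0, |h| ≤ 1 :=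
    (continuous_abs.tendsto' 0 0 abs_zero).eventually_le_const one_pos
  refine hasDerivAt_measureReal_image μ (funext hφ.map_zero)
    (hsmall.mono fun h hh => hφ.lipschitzWith_sub_id hv hh) ?_ hΩ hμΩ
  exact ae_restrict_of_ae (hv'.mono fun x hx => hφ.hasDerivWithinAt_fderiv hv hx)

end IsFlowOf

theorem stmt8_general [FiniteDimensional ℝ E] [MeasurableSpace E] [BorelSpace E]
    {μ : Measure E} [μ.IsAddHaarMeasure] {v : E → E} {φ : ℝ → E → E} {L : ℝ≥0}
    (hv : LipschitzWith L v) (hv' : ∀ᵐ x ∂μ, HasStrictFDerivAt v (fderiv ℝ v x) x)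
    (hφ : IsFlowOf φ v) {Ω : Set E} (hΩ : MeasurableSet Ω) (hμΩ : μ Ω ≠ ⊤) (t : ℝ) :
    HasDerivAt (fun s => μ.real (φ s '' Ω))
      (∫ x in φ t '' Ω, LinearMap.trace ℝ E (fderiv ℝ v x) ∂μ) t := by
  have hzero := hφ.hasDerivAt_measureReal_image_zero hv hv'
    (hφ.measurableSet_image hv hΩ t) (hφ.addHaar_image_ne_top hv hμΩ t)
  rw [← sub_self t] at hzero
  simpa only [Set.image_image, hφ.map_sub hv] using hzero.comp_sub_const t t

end Flow

/-- Liouville's formula: the derivative of the volume of a compact set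
transported by the flow of a `C¹` vector field equals the integral of the
divergence of the field over the transported set. -/
theorem stmt8 (n : ℕ) (hn : 1 ≤ n)
    (v : EuclideanSpace ℝ (Fin n) → EuclideanSpace ℝ (Fin n))
    (hv : ContDiff ℝ 1 v) (hsupp : HasCompactSupport v)
    (φ : ℝ → EuclideanSpace ℝ (Fin n) → EuclideanSpace ℝ (Fin n))
    (hφ0 : ∀ x, φ 0 x = x)
    (hφ : ∀ x t, HasDerivAt (fun s => φ s x) (v (φ t x)) t) :
    ∀ (Ω : Set (EuclideanSpace ℝ (Fin n))), IsCompact Ω → ∀ t : ℝ,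
      HasDerivAt (fun s => (volume (φ s '' Ω)).toReal)
        (∫ x in φ t '' Ω,
          LinearMap.trace ℝ (EuclideanSpace ℝ (Fin n))
            (fderiv ℝ v x : EuclideanSpace ℝ (Fin n) →ₗ[ℝ] EuclideanSpace ℝ (Fin n))) t := by
  intro Ω hΩ t
  obtain ⟨L, hL⟩ := hv.lipschitzWith_of_hasCompactSupport hsupp one_ne_zero
  have hstrict (x) := hv.contDiffAt.hasStrictFDerivAt (x := x) one_ne_zero
  exact stmt8_general hL (.of_forall hstrict) ⟨hφ0, hφ⟩ hΩ.measurableSet hΩ.measure_ne_top t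
end

section
/- Let C ≥ 0, δ ≥ 0, T > 0, and let H : ℝ → ℝ be differentiable on [0, T] with H(t) ≥ 0 for t ∈ [0, T], H(0) = 0, and H′(t) ≤ C·(√(H(t)) + δ) for all t ∈ [0, T]. Then for every t ∈ [0, T], H(t) ≤ (C·t/2 + √(2·C·δ·t))². -/
open Set

open Filter Topology

/-!
The function `B s = (C * s / 2 + √(A + ε * s)) ^ 2` starts at `A` and satisfies
`B' = C * √B + ε + ε * C * s / (2 * √(A + ε * s))`, so it is a supersolution of `y' = C * √y + ε`.
A subsolution starting below `A` can only cross `B` at a contact point, which is impossible as soon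
as the differential inequality is strict. Enlarging `A` and `ε` by `η > 0` makes it strict and
moreover keeps `√` away from its singularity at `0`; then `η → 0`.
-/

/-- The supersolution of `y' = C * √y + ε`, `y 0 = A`, that bounds subsolutions at time `s`; it
plays the role that `gronwallBound` plays for `y' = K * y + ε`. It is chosen for its closed form:
the exact solution is in general only given implicitly. -/
noncomputable def sqrtGronwallBound (A C ε s : ℝ) : ℝ :=
  (C * s / 2 + √(A + ε * s)) ^ 2

section

variable {A C ε s : ℝ}

theorem sqrtGronwallBound_zero (hA : 0 ≤ A) : sqrtGronwallBound A C ε 0 = A := by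
  simp [sqrtGronwallBound, Real.sq_sqrt hA]

theorem sqrt_sqrtGronwallBound (hs : 0 ≤ C * s) :
    √(sqrtGronwallBound A C ε s) = C * s / 2 + √(A + ε * s) :=
  Real.sqrt_sq (by positivity)

theorem hasDerivAt_sqrtGronwallBound (hp : 0 < A + ε * s) :
    HasDerivAt (sqrtGronwallBound A C ε)
      (C * (C * s / 2 + √(A + ε * s)) + ε + ε * (C * s) / (2 * √(A + ε * s))) s := by
  have h_linear : HasDerivAt (fun u ↦ C * u / 2) (C / 2) s := by
    simpa using ((hasDerivAt_id s).const_mul C).div_const 2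
  have h_radicand : HasDerivAt (fun u ↦ A + ε * u) ε s := by
    simpa using ((hasDerivAt_id s).const_mul ε).const_add A
  have h_sqrt_pos : 0 < √(A + ε * s) := Real.sqrt_pos.2 hp
  refine ((h_linear.add (h_radicand.sqrt hp.ne')).pow 2).congr_deriv ?_
  simp only [Pi.add_apply]
  generalize √(A + ε * s) = r at h_sqrt_pos ⊢
  field_simp
  ring

theorem continuous_sqrtGronwallBound_add (A C ε s : ℝ) :
    Continuous fun η ↦ sqrtGronwallBound (A + η) C (ε + η) s := by
  unfold sqrtGronwallBound
  fun_prop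

variable {f f' : ℝ → ℝ} {a b : ℝ}

theorem le_sqrtGronwallBound_of_liminf_deriv_right_lt (hA : 0 < A) (hC : 0 ≤ C) (hε : 0 ≤ ε)
    (hf : ContinuousOn f (Icc a b))
    (hf' : ∀ x ∈ Ico a b, ∀ r, f' x < r → ∃ᶠ z in 𝓝[>] x, slope f x z < r)
    (ha : f a ≤ A) (bound : ∀ x ∈ Ico a b, f' x < C * √|f x| + ε) :
    ∀ x ∈ Icc a b, f x ≤ sqrtGronwallBound A C ε (x - a) := by
  have h_deriv (x : ℝ) (hx : a ≤ x) :=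
    (hasDerivAt_sqrtGronwallBound (C := C)
      (add_pos_of_pos_of_nonneg hA (mul_nonneg hε (sub_nonneg.2 hx)))).comp_sub_const x a
  refine image_le_of_liminf_slope_right_lt_deriv_boundary' hf hf'
    (by rwa [sub_self, sqrtGronwallBound_zero hA.le])
    (fun x hx ↦ (h_deriv x hx.1).continuousAt.continuousWithinAt)
    (fun x hx ↦ (h_deriv x hx.1).hasDerivWithinAt) fun x hx h_contact ↦ ?_
  have hCs : 0 ≤ C * (x - a) := mul_nonneg hC (sub_nonneg.2 hx.1)
  calc f' x
      < C * √|f x| + ε := bound x hx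
    _ = C * (C * (x - a) / 2 + √(A + ε * (x - a))) + ε := by
      rw [h_contact, abs_of_nonneg (sq_nonneg _), sqrt_sqrtGronwallBound hCs]
    _ ≤ _ := le_add_of_nonneg_right (by positivity)

-- `|f x|` rather than `f x` because `√` takes the junk value `0` on negative reals.
theorem stmt9_general (hA : 0 ≤ A) (hC : 0 ≤ C) (hε : 0 ≤ ε)
    (hf : ContinuousOn f (Icc a b))
    (hf' : ∀ x ∈ Ico a b, ∀ r, f' x < r → ∃ᶠ z in 𝓝[>] x, slope f x z < r)
    (ha : f a ≤ A) (bound : ∀ x ∈ Ico a b, f' x ≤ C * √|f x| + ε) :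
    ∀ x ∈ Icc a b, f x ≤ sqrtGronwallBound A C ε (x - a) := by
  intro x hx
  have h_perturbed (η : ℝ) (hη : 0 < η) :
      f x ≤ sqrtGronwallBound (A + η) C (ε + η) (x - a) :=
    le_sqrtGronwallBound_of_liminf_deriv_right_lt (by positivity) hC (by positivity) hf hf'
      (by linarith) (fun y hy ↦ by linarith [bound y hy]) x hx
  have h_lim : Tendsto (fun η ↦ sqrtGronwallBound (A + η) C (ε + η) (x - a)) (𝓝[>] 0)
      (𝓝 (sqrtGronwallBound A C ε (x - a))) := by
    simpa only [add_zero] using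
      ((continuous_sqrtGronwallBound_add A C ε (x - a)).tendsto 0).mono_left nhdsWithin_le_nhds
  exact ge_of_tendsto h_lim (eventually_nhdsWithin_of_forall h_perturbed)

end

/-- The Grönwall-type comparison used in Lemma 4.7: if `H ≥ 0`, `H(0) = 0`
and `H' ≤ C(√H + δ)` on `[0, T]`, then `H(t) ≤ (Ct/2 + √(2Cδt))²`. -/
theorem stmt9 (C δ T : ℝ) (hC : 0 ≤ C) (hδ : 0 ≤ δ) (hT : 0 < T)
    (H : ℝ → ℝ)
    (hdiff : ∀ t ∈ Icc (0:ℝ) T, DifferentiableAt ℝ H t)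
    (hpos : ∀ t ∈ Icc (0:ℝ) T, 0 ≤ H t)
    (h0 : H 0 = 0)
    (hderiv : ∀ t ∈ Icc (0:ℝ) T, deriv H t ≤ C * (Real.sqrt (H t) + δ)) :
    ∀ t ∈ Icc (0:ℝ) T, H t ≤ (C * t / 2 + Real.sqrt (2 * C * δ * t))^2 := by
  intro t ht
  -- `C * δ` in place of `2 * C * δ` would give the sharper bound `(C * t / 2 + √(C * δ * t)) ^ 2`.
  have h_bound : ∀ x ∈ Ico 0 T, deriv H x ≤ C * √|H x| + 2 * C * δ := fun x hx ↦ by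
    rw [abs_of_nonneg (hpos x (Ico_subset_Icc_self hx))]
    linarith [hderiv x (Ico_subset_Icc_self hx), mul_nonneg hC hδ]
  have h_le := stmt9_general le_rfl hC (by positivity)
    (fun x hx ↦ (hdiff x hx).continuousAt.continuousWithinAt)
    (fun x hx _ ↦
      (hdiff x (Ico_subset_Icc_self hx)).hasDerivAt.hasDerivWithinAt.liminf_right_slope_le)
    h0.le h_bound t ht
  simpa only [sqrtGronwallBound, sub_zero, zero_add] using h_le
end

section
/- Let u ≥ 1 be a natural number, a : Fin u → ℝ, and let T = (ℝ/ℤ)^u be the u-dimensional torus with quotient map sending x ∈ ℝᵘ to its class. Let q : ℝ → T be the map q(t) = (t·a₁, …, t·a_u) mod ℤᵘ, and assume q has dense range in T. Let g : T → ℂ be continuous with g(q(0)) ≠ 0, and suppose there is d ∈ ℝ such that g(q(t)) = g(q(0))·e^{√−1·d·t} for all t ∈ ℝ. Then there exist integers k₁, …, k_u ∈ ℤ with d = 2π·(k₁a₁ + ⋯ + k_u a_u). -/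
open scoped Real

/-!
A continuous function `g` on the torus is a uniform limit of trigonometric polynomials, so its
restriction to the line `t ↦ t • a` is a uniform limit of combinations of the exponentials
`exp (i w t)` with `w ∈ {2π ∑ kⱼ aⱼ}`. If this restriction is a nonzero multiple of `exp (i d t)`,
then `d` is one of these `w`: otherwise the mean over `[0, R]` of `exp (-i d t)` times each
combination would tend to `0` as `R → ∞`, hence so would that of `exp (-i d t) * exp (i d t) = 1`.
-/

open Filter Topology MeasureTheory BoundedContinuousFunction UnitAddTorus
open scoped Interval

section IntervalAverage

variable {E : Type*} [NormedAddCommGroup E] [NormedSpace ℝ E] {f : ℝ → E}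

theorem norm_intervalAverage_le {a b C : ℝ} (hC : 0 ≤ C) (hf : ∀ t ∈ Ι a b, ‖f t‖ ≤ C) :
    ‖⨍ t in a..b, f t‖ ≤ C := by
  rw [interval_average_eq, norm_smul, norm_inv, Real.norm_eq_abs, ← div_eq_inv_mul]
  exact div_le_of_le_mul₀ (abs_nonneg _) hC (intervalIntegral.norm_integral_le_of_norm_le_const hf)

theorem tendsto_intervalAverage_zero_of_norm_integral_le {a C : ℝ}
    (hf : ∀ R ≥ a, ‖∫ t in a..R, f t‖ ≤ C) :
    Tendsto (fun R ↦ ⨍ t in a..R, f t) atTop (𝓝 0) := by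
  simp only [interval_average_eq]
  have hinv : Tendsto (fun R : ℝ ↦ (R - a)⁻¹) atTop (𝓝 0) :=
    tendsto_inv_atTop_zero.comp (tendsto_atTop_add_const_right _ (-a) tendsto_id)
  exact hinv.zero_smul_isBoundedUnder_le
    (isBoundedUnder_of_eventually_le ((eventually_ge_atTop a).mono hf))

theorem tendsto_intervalAverage_exp {c : ℂ} (hc : c ≠ 0) (hre : c.re ≤ 0) :
    Tendsto (fun R : ℝ ↦ ⨍ t in (0 : ℝ)..R, Complex.exp (c * t)) atTop (𝓝 0) := by
  refine tendsto_intervalAverage_zero_of_norm_integral_le (C := 2 / ‖c‖) fun R hR ↦ ?_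
  have hexp : ‖Complex.exp (c * R)‖ ≤ 1 := by
    simpa [Complex.norm_exp] using mul_nonpos_of_nonpos_of_nonneg hre hR
  rw [integral_exp_mul_complex hc, norm_div]
  gcongr
  calc ‖Complex.exp (c * R) - Complex.exp (c * (0 : ℝ))‖
      ≤ ‖Complex.exp (c * R)‖ + ‖Complex.exp (c * (0 : ℝ))‖ := norm_sub_le _ _
    _ ≤ 1 + 1 := by gcongr; simp
    _ = 2 := one_add_one_eq_two

end IntervalAverage

section ZeroMean

/-- The mean over `[0, R]`, as a continuous linear functional on bounded continuous functions. -/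
noncomputable def intervalMean (R : ℝ) : (ℝ →ᵇ ℂ) →L[ℂ] ℂ :=
  LinearMap.mkContinuous
    { toFun := fun f ↦ ⨍ t in (0 : ℝ)..R, f t
      map_add' := fun f g ↦ by
        simp [interval_average_eq, intervalIntegral.integral_add
          (f.continuous.intervalIntegrable _ _) (g.continuous.intervalIntegrable _ _)]
      map_smul' := fun c f ↦ by simp [interval_average_eq, mul_left_comm] }
    1 fun f ↦ by
      simpa using norm_intervalAverage_le (norm_nonneg f) fun t _ ↦ f.norm_coe_le_norm t

theorem intervalMean_apply (R : ℝ) (f : ℝ →ᵇ ℂ) : intervalMean R f = ⨍ t in (0 : ℝ)..R, f t :=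
  rfl

theorem norm_intervalMean_le (R : ℝ) : ‖intervalMean R‖ ≤ 1 :=
  LinearMap.mkContinuous_norm_le _ zero_le_one _

/-- The bounded continuous functions on `ℝ` whose Bohr mean `lim_{R → ∞} (1/R) ∫₀ᴿ f` exists and
vanishes; the frequencies of a function are detected by twisting it into this space. -/
noncomputable def zeroMean : Submodule ℂ (ℝ →ᵇ ℂ) where
  carrier := {f | Tendsto (fun R ↦ intervalMean R f) atTop (𝓝 0)}
  add_mem' hf hg := by simpa using Tendsto.add hf hg
  zero_mem' := by simp
  smul_mem' c _ hf := by simpa using Tendsto.const_mul c hf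

theorem mem_zeroMean {f : ℝ →ᵇ ℂ} :
    f ∈ zeroMean ↔ Tendsto (fun R ↦ intervalMean R f) atTop (𝓝 0) :=
  Iff.rfl

theorem isClosed_zeroMean : IsClosed (zeroMean : Set (ℝ →ᵇ ℂ)) := by
  have hlip (R : ℝ) : LipschitzWith 1 (intervalMean R) :=
    (intervalMean R).lipschitz.weaken (norm_intervalMean_le R)
  exact (LipschitzWith.uniformEquicontinuous _ 1 hlip).equicontinuous.isClosed_setOfPred_tendsto
    continuous_const

theorem innerProbChar_real_apply (w t : ℝ) :
    innerProbChar w t = Complex.exp (w * Complex.I * t) := by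
  simp [innerProbChar_apply, mul_right_comm]

theorem innerProbChar_mem_zeroMean_iff {w : ℝ} : innerProbChar w ∈ zeroMean ↔ w ≠ 0 := by
  simp only [mem_zeroMean, intervalMean_apply, innerProbChar_real_apply]
  refine ⟨?_, fun hw ↦ ?_⟩
  · rintro hlim rfl
    have hone : (fun R : ℝ ↦ ⨍ _ in (0 : ℝ)..R, (1 : ℂ)) =ᶠ[atTop] fun _ ↦ 1 := by
      filter_upwards [eventually_ne_atTop 0] with R hR
      simp [interval_average_eq, hR]
    simp only [Complex.ofReal_zero, zero_mul, Complex.exp_zero] at hlim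
    exact one_ne_zero (tendsto_nhds_unique (hlim.congr' hone) tendsto_const_nhds).symm
  · have hc : (w * Complex.I : ℂ) ≠ 0 := by simpa using hw
    exact tendsto_intervalAverage_exp hc (by simp)

theorem innerProbChar_add {V : Type*} [NormedAddCommGroup V] [InnerProductSpace ℝ V] (v w : V) :
    innerProbChar (v + w) = innerProbChar v * innerProbChar w :=
  char_add_eq_mul v w

theorem innerProbChar_mem_closure_span_iff {S : Set ℝ} {d : ℝ} :
    innerProbChar d ∈ (Submodule.span ℂ (innerProbChar '' S)).topologicalClosure ↔ d ∈ S := by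
  refine ⟨fun hd ↦ ?_, fun hd ↦
    Submodule.le_topologicalClosure _ (Submodule.subset_span ⟨d, hd, rfl⟩)⟩
  by_contra hdS
  let twist : (ℝ →ᵇ ℂ) →L[ℂ] (ℝ →ᵇ ℂ) := ContinuousLinearMap.mul ℂ _ (innerProbChar (-d))
  have htwist (w : ℝ) : twist (innerProbChar w) ∈ zeroMean ↔ -d + w ≠ 0 := by
    rw [← innerProbChar_mem_zeroMean_iff, innerProbChar_add]
    rfl
  have hspan : Submodule.span ℂ (innerProbChar '' S) ≤ zeroMean.comap twist.toLinearMap := by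
    rw [Submodule.span_le]
    rintro _ ⟨w, hwS, rfl⟩
    exact (htwist w).2 fun h ↦ hdS (by rwa [← neg_add_eq_zero.1 h] at hwS)
  have hclosure := Submodule.topologicalClosure_minimal _ hspan
    (isClosed_zeroMean.preimage twist.continuous)
  exact (htwist d).1 (hclosure hd) (neg_add_cancel d)

end ZeroMean

section Torus

variable {ι : Type*}

/-- The one-parameter subgroup `t ↦ t • a mod ℤ^ι` of the torus. -/
def linearFlow (a : ι → ℝ) : C(ℝ, UnitAddTorus ι) where
  toFun t i := ((t * a i : ℝ) : UnitAddCircle)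
  continuous_toFun := by fun_prop

variable [Fintype ι]

/-- The frequency of the monomial `mFourier n` along `linearFlow a`. -/
noncomputable def flowFrequency (a : ι → ℝ) (n : ι → ℤ) : ℝ :=
  2 * π * ∑ i, (n i : ℝ) * a i

theorem mFourier_linearFlow (a : ι → ℝ) (n : ι → ℤ) (t : ℝ) :
    mFourier n (linearFlow a t) = innerProbChar (flowFrequency a n) t := by
  have hfactor (i : ι) : fourier (n i) ((t * a i : ℝ) : UnitAddCircle) =
      Complex.exp (2 * π * Complex.I * n i * (t * a i)) := by
    simp
  calc mFourier n (linearFlow a t)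
      = ∏ i, Complex.exp (2 * π * Complex.I * n i * (t * a i)) :=
        Finset.prod_congr rfl fun i _ ↦ hfactor i
    _ = Complex.exp (∑ i, 2 * π * Complex.I * n i * (t * a i)) := (Complex.exp_sum _ _).symm
    _ = innerProbChar (flowFrequency a n) t := by
        rw [innerProbChar_real_apply, flowFrequency]
        push_cast [Finset.mul_sum, Finset.sum_mul]
        congr! 2 with i
        ring

theorem mkOfCompact_compContinuous_linearFlow_mem_closure_span (a : ι → ℝ)
    (g : C(UnitAddTorus ι, ℂ)) :
    (mkOfCompact g).compContinuous (linearFlow a) ∈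
      (Submodule.span ℂ (innerProbChar '' Set.range (flowFrequency a))).topologicalClosure := by
  let restrict : C(UnitAddTorus ι, ℂ) →L[ℂ] (ℝ →ᵇ ℂ) :=
    (compContinuousCLM ℂ ℂ (linearFlow a)).comp
      (ContinuousMap.linearIsometryBoundedOfCompact (UnitAddTorus ι) ℂ ℂ :
        C(UnitAddTorus ι, ℂ) →L[ℂ] (UnitAddTorus ι →ᵇ ℂ))
  have hrestrict (n : ι → ℤ) : restrict (mFourier n) = innerProbChar (flowFrequency a n) :=
    BoundedContinuousFunction.ext (mFourier_linearFlow a n)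
  have himage : (Submodule.span ℂ (Set.range (mFourier (d := ι)))).map restrict.toLinearMap =
      Submodule.span ℂ (innerProbChar '' Set.range (flowFrequency a)) := by
    rw [Submodule.map_span, ← Set.range_comp, ← Set.range_comp]
    exact congrArg _ (congrArg Set.range (funext hrestrict))
  rw [← himage]
  refine Submodule.topologicalClosure_map _ _ ⟨g, ?_, rfl⟩
  simp [span_mFourier_closure_eq_top]

theorem stmt12_general (a : ι → ℝ) {g : UnitAddTorus ι → ℂ} (hg : Continuous g) {c : ℂ}
    (hc : c ≠ 0) {d : ℝ} (hgd : ∀ t : ℝ, g (linearFlow a t) = c * Complex.exp (Complex.I * d * t)) :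
    ∃ k : ι → ℤ, d = 2 * π * ∑ i, (k i : ℝ) * a i := by
  have hrestrict : (mkOfCompact ⟨g, hg⟩).compContinuous (linearFlow a) = c • innerProbChar d := by
    ext t
    simpa [innerProbChar_real_apply, mul_comm Complex.I] using hgd t
  have hmem := mkOfCompact_compContinuous_linearFlow_mem_closure_span a ⟨g, hg⟩
  rw [hrestrict, Submodule.smul_mem_iff _ hc, innerProbChar_mem_closure_span_iff] at hmem
  obtain ⟨k, hk⟩ := hmem
  exact ⟨k, hk.symm⟩

end Torus

/-- Key step in Corollary 4.11: a continuous function on the torus which,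
along a dense one-parameter subgroup with slope vector `a`, equals
`g(e)·e^{√-1 d t}`, must have `d = 2π Σ kⱼ aⱼ` for integers `kⱼ`. -/
theorem stmt12 (u : ℕ) (hu : 1 ≤ u) (a : Fin u → ℝ)
    (q : ℝ → (Fin u → AddCircle (1:ℝ)))
    (hq : ∀ t : ℝ, q t = fun i => ((t * a i : ℝ) : AddCircle (1:ℝ)))
    (hdense : DenseRange q)
    (g : (Fin u → AddCircle (1:ℝ)) → ℂ) (hg : Continuous g)
    (hg0 : g (q 0) ≠ 0) (d : ℝ)
    (hgd : ∀ t : ℝ, g (q t) = g (q 0) * Complex.exp (Complex.I * d * t)) :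
    ∃ k : Fin u → ℤ, d = 2 * π * ∑ i, (k i : ℝ) * a i := by
  obtain rfl : q = linearFlow a := funext hq
  exact stmt12_general a hg hg0 hgd
end
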